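/- (Cascade of two geometrically ISS systems is ISS.) Let n₁, n₂, m ∈ ℕ be positive, let x¹ : ℕ → ℝ^{n₁}, x² : ℕ → ℝ^{n₂}, u : ℕ → ℝ^m, and let a₁, a₂ ∈ [0,1), c₁, c₂, d₁, d₂ ≥ 0. Suppose that for all k ∈ ℕ: ‖x¹_{k+1}‖∞ ≤ a₁ ‖x¹_k‖∞ + c₁ ‖u_k‖∞ + d₁ and ‖x²_{k+1}‖∞ ≤ a₂ ‖x²_k‖∞ + c₂ ‖x¹_{k+1}‖∞ + d₂ (the second system is driven by the state of the first). Then there exist a constant C ≥ 0 and λ ∈ [0,1), depending only on a₁, a₂, c₁, c₂, such that for all k ∈ ℕ: max(‖x¹_k‖∞, ‖x²_k‖∞) ≤ C λ^k (‖x¹_0‖∞ + ‖x²_0‖∞) + C ( max_{0≤h<k} ‖u_h‖∞ + d₁ + d₂ ), where the term max_{0≤h<k} ‖u_h‖∞ is interpreted as 0 when k = 0. -/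

import Mathlib

/-- a cascade of two geometrically ISS systems is ISS. The constants
`C` and `λ` depend only on `a₁, a₂, c₁, c₂`, whence the existential quantifier
precedes the dimensions, the disturbance bounds `d₁, d₂`, and the trajectories.
The maximum of the input norms over the empty range (`k = 0`) is `0`. -/
theorem cascade_iss (a1 a2 c1 c2 : ℝ)
    (ha10 : 0 ≤ a1) (ha11 : a1 < 1) (ha20 : 0 ≤ a2) (ha21 : a2 < 1)
    (hc1 : 0 ≤ c1) (hc2 : 0 ≤ c2) :
    ∃ C lam : ℝ, 0 ≤ C ∧ 0 ≤ lam ∧ lam < 1 ∧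
      ∀ (n1 n2 m : ℕ), 0 < n1 → 0 < n2 → 0 < m →
      ∀ (d1 d2 : ℝ), 0 ≤ d1 → 0 ≤ d2 →
      ∀ (x1 : ℕ → Fin n1 → ℝ) (x2 : ℕ → Fin n2 → ℝ) (u : ℕ → Fin m → ℝ),
        (∀ k, ‖x1 (k + 1)‖ ≤ a1 * ‖x1 k‖ + c1 * ‖u k‖ + d1) →
        (∀ k, ‖x2 (k + 1)‖ ≤ a2 * ‖x2 k‖ + c2 * ‖x1 (k + 1)‖ + d2) →
        ∀ k, max ‖x1 k‖ ‖x2 k‖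
          ≤ C * lam ^ k * (‖x1 0‖ + ‖x2 0‖)
            + C * ((((Finset.range k).sup fun j => ‖u j‖₊ : NNReal) : ℝ) + d1 + d2) := by
  obtain ⟨lam, hl1, hl2, hl3⟩ : ∃ lam : ℝ, a1 < lam ∧ a2 ≤ lam ∧ lam < 1 := by
    refine ⟨(1 + max a1 a2) / 2, ?_, ?_, ?_⟩
    · have := le_max_left a1 a2
      linarith
    · have := le_max_right a1 a2
      linarith
    · have := max_lt ha11 ha21
      linarith
  have hl0 : 0 ≤ lam := ha20.trans hl2
  have hla : 0 < lam - a1 := by linarith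
  have h1l : 0 < 1 - lam := by linarith
  obtain ⟨W, hW1, hW⟩ : ∃ W : ℝ, 1 ≤ W ∧ (W + c2) * a1 ≤ lam * W := by
    refine ⟨1 + c2 / (lam - a1), ?_, ?_⟩
    · have : 0 ≤ c2 / (lam - a1) := by positivity
      linarith
    · have h : c2 / (lam - a1) * (lam - a1) = c2 := by field_simp
      nlinarith [mul_nonneg hc2 (sub_nonneg.2 ha11.le)]
  obtain ⟨G, hG⟩ : ∃ G : ℝ, G = (W + c2) * (c1 + 1) := ⟨_, rfl⟩
  have hG0 : 0 ≤ G := by rw [hG]; positivity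
  have hG1 : 1 ≤ G := by rw [hG]; nlinarith [mul_nonneg (by linarith : 0 ≤ W + c2) hc1]
  have hGc : (W + c2) * c1 ≤ G := by rw [hG]; nlinarith
  have hGd : W + c2 ≤ G := by rw [hG]; nlinarith [mul_nonneg (by linarith : 0 ≤ W + c2) hc1]
  obtain ⟨K, hK0, hK⟩ : ∃ K : ℝ, 0 ≤ K ∧ lam * K + G = K := by
    refine ⟨G / (1 - lam), by positivity, ?_⟩
    field_simp
    ring
  refine ⟨W + K, lam, by linarith, hl0, hl3, ?_⟩
  intro n1 n2 m _ _ _ d1 d2 hd1 hd2 x1 x2 u h1 h2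
  obtain ⟨S, hS⟩ : ∃ S : ℕ → ℝ, S = fun k =>
    (((Finset.range k).sup fun j => ‖u j‖₊ : NNReal) : ℝ) := ⟨_, rfl⟩
  have hS0 : ∀ k, 0 ≤ S k := fun k => by rw [hS]; exact NNReal.coe_nonneg _
  have hSm : ∀ k, S k ≤ S (k + 1) := fun k => by
    rw [hS]
    exact NNReal.coe_le_coe.2 (Finset.sup_mono (Finset.range_mono (Nat.le_succ k)))
  have hSu : ∀ k, ‖u k‖ ≤ S (k + 1) := fun k => by
    rw [hS]
    have : ‖u k‖₊ ≤ (Finset.range (k + 1)).sup fun j => ‖u j‖₊ :=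
      Finset.le_sup (f := fun j => ‖u j‖₊) (Finset.self_mem_range_succ k)
    exact NNReal.coe_le_coe.2 this
  have key : ∀ k, W * ‖x1 k‖ + ‖x2 k‖ ≤
      lam ^ k * (W * ‖x1 0‖ + ‖x2 0‖) + K * (S k + d1 + d2) := by
    intro k
    induction k with
    | zero =>
      have := hS0 0
      have : 0 ≤ K * (S 0 + d1 + d2) := by positivity
      simpa using this
    | succ k ih =>
      have e1 := mul_le_mul_of_nonneg_left (h1 k) (by linarith : 0 ≤ W + c2)
      have e2 := h2 k
      have e3 := mul_le_mul_of_nonneg_right hW (norm_nonneg (x1 k))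
      have e4 := mul_le_mul_of_nonneg_right hl2 (norm_nonneg (x2 k))
      have e5 := mul_le_mul_of_nonneg_right hGc (norm_nonneg (u k))
      have e6 := mul_le_mul_of_nonneg_right hGd hd1
      have e7 := mul_le_mul_of_nonneg_right hG1 hd2
      have e8 := mul_le_mul_of_nonneg_left (hSu k) hG0
      have e9 := mul_le_mul_of_nonneg_left (hSm k) (mul_nonneg hl0 hK0)
      have e10 := mul_le_mul_of_nonneg_left ih hl0
      have e11 : K * (S (k + 1) + d1 + d2) = (lam * K + G) * (S (k + 1) + d1 + d2) := by
        rw [hK]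
      rw [e11, pow_succ]
      linarith
  intro k
  have hk := key k
  have hSk : (((Finset.range k).sup fun j => ‖u j‖₊ : NNReal) : ℝ) = S k := by rw [hS]
  rw [hSk]
  have p1 := norm_nonneg (x1 k)
  have p2 := norm_nonneg (x2 k)
  have p3 : ‖x1 k‖ ≤ W * ‖x1 k‖ := le_mul_of_one_le_left p1 hW1
  have q0 : 0 ≤ lam ^ k := pow_nonneg hl0 k
  have q1 := norm_nonneg (x1 0)
  have q2 := norm_nonneg (x2 0)
  have q3 : lam ^ k * ‖x2 0‖ ≤ W * (lam ^ k * ‖x2 0‖) :=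
    le_mul_of_one_le_left (by positivity) hW1
  have q4 : 0 ≤ K * (lam ^ k * (‖x1 0‖ + ‖x2 0‖)) := by positivity
  have q5 : 0 ≤ W * (S k + d1 + d2) := by
    have := hS0 k
    positivity
  have fin : W * ‖x1 k‖ + ‖x2 k‖ ≤ (W + K) * lam ^ k * (‖x1 0‖ + ‖x2 0‖)
      + (W + K) * (S k + d1 + d2) := by linarith
  exact max_le (by linarith) (by linarith)
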